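/- arXiv:1708.03221 — 4 statements merged into one kernel-verified Lean document; each statement's English description precedes it below -/
import Mathlib

section
/- Let Ω and X be compact metric spaces and let Φ be a skew-product transformation on Ω×X with continuous base φ: Ω → Ω satisfying condition (H). Let a ∈ ℝ and let f: Ω×X → ℝ be a bounded Borel measurable function such that μ(D_f) = 0 and ∫_{Ω×X} f dμ = a for every Φ-invariant Borel probability measure μ on Ω×X. Then (1/n) Σ_{i=0}^{n-1} f(Φ^i(ω,x)) converges to a as n → ∞, uniformly in (ω,x) ∈ Ω×X. -/
open MeasureTheory Filter Topology

/-!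
Averages of `f` along orbit segments are integrals of `f` against empirical measures. By compactness
it is enough to look at the weak cluster points `μ` of the empirical measures as the segments get
long, the starting points being arbitrary. The base map is continuous, so the projection of `μ` to
the base is invariant; condition (H) then says that the transformation is continuous `μ`-almost
everywhere, and this is exactly what is needed for `μ` itself to be invariant. Hence `f` is
continuous `μ`-almost everywhere, its integral is weakly continuous at `μ`, and its value there
is `a`.
-/

section ClusterPoints

variable {ι K Z : Type*} [TopologicalSpace K] [TopologicalSpace Z] {l : Filter ι} {u : ι → K}

theorem tendsto_comp_of_forall_mapClusterPt [CompactSpace K] {F : K → Z} {z : Z}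
    (hF : ∀ c, MapClusterPt c l u → Tendsto F (𝓝 c) (𝓝 z)) : Tendsto (F ∘ u) l (𝓝 z) := by
  rw [tendsto_iff_ultrafilter]
  intro U hU
  have hlim : Tendsto u U (𝓝 (U.map u).lim) := (U.map u).le_nhds_lim
  exact (hF _ (hlim.mapClusterPt.mono hU)).comp hlim

theorem eq_of_mapClusterPt_of_tendsto [T2Space K] {c d : K} (hc : MapClusterPt c l u)
    (hd : Tendsto u l (𝓝 d)) : c = d :=
  eq_of_nhds_neBot (ClusterPt.mono hc hd)

end ClusterPoints

section WeakConvergence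

variable {ι Y Z : Type*} [TopologicalSpace Y] [TopologicalSpace Z]

theorem closure_preimage_subset_union_not_continuousAt (g : Y → Z) {F : Set Z} (hF : IsClosed F) :
    closure (g ⁻¹' F) ⊆ g ⁻¹' F ∪ {y | ¬ ContinuousAt g y} := by
  intro y hy
  by_cases hgy : ContinuousAt g y
  · exact .inl (closure_minimal (Set.image_preimage_subset g F) hF (mem_closure_image hgy hy))
  · exact .inr hgy

variable [MeasurableSpace Y] [OpensMeasurableSpace Y] [HasOuterApproxClosed Y] {L : Filter ι}
  [L.IsCountablyGenerated] {μs : ι → ProbabilityMeasure Y} {μ : ProbabilityMeasure Y}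

theorem tendsto_map_of_ae_continuousAt [MeasurableSpace Z] [OpensMeasurableSpace Z] {g : Y → Z}
    (hg : Measurable g) (hgc : ∀ᵐ y ∂(μ : Measure Y), ContinuousAt g y) (hμs : Tendsto μs L (𝓝 μ)) :
    Tendsto (fun i ↦ (μs i).map hg.aemeasurable) L (𝓝 (μ.map hg.aemeasurable)) := by
  refine tendsto_of_forall_isClosed_limsup_le' fun F hF ↦ ?_
  simp only [ProbabilityMeasure.toMeasure_map, Measure.map_apply hg hF.measurableSet]
  calc limsup (fun i ↦ (μs i : Measure Y) (g ⁻¹' F)) L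
      ≤ limsup (fun i ↦ (μs i : Measure Y) (closure (g ⁻¹' F))) L :=
        limsup_le_limsup (.of_forall fun i ↦ measure_mono subset_closure)
    _ ≤ (μ : Measure Y) (closure (g ⁻¹' F)) :=
        ProbabilityMeasure.limsup_measure_closed_le_of_tendsto hμs isClosed_closure
    _ ≤ (μ : Measure Y) (g ⁻¹' F ∪ {y | ¬ ContinuousAt g y}) :=
        measure_mono (closure_preimage_subset_union_not_continuousAt g hF)
    _ = (μ : Measure Y) (g ⁻¹' F) :=
        measure_congr (union_ae_eq_left_of_ae_eq_empty (ae_eq_empty.2 (ae_iff.1 hgc)))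

theorem tendsto_integral_of_ae_continuousAt {g : Y → ℝ} {C : ℝ} (hg : Measurable g)
    (hC : ∀ y, |g y| ≤ C) (hgc : ∀ᵐ y ∂(μ : Measure Y), ContinuousAt g y)
    (hμs : Tendsto μs L (𝓝 μ)) :
    Tendsto (fun i ↦ ∫ y, g y ∂(μs i : Measure Y)) L (𝓝 (∫ y, g y ∂(μ : Measure Y))) := by
  let gIcc : Y → Set.Icc (-C) C := fun y ↦ ⟨g y, abs_le.1 (hC y)⟩
  have measurable_gIcc : Measurable gIcc := hg.subtype_mk
  have continuousAt_gIcc : ∀ᵐ y ∂(μ : Measure Y), ContinuousAt gIcc y :=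
    hgc.mono fun y hy ↦ IsInducing.subtypeVal.continuousAt_iff.2 hy
  let val : BoundedContinuousFunction (Set.Icc (-C) C) ℝ :=
    .mkOfCompact ⟨Subtype.val, continuous_subtype_val⟩
  have integral_val (ν : ProbabilityMeasure Y) :
      ∫ x, val x ∂(ν.map measurable_gIcc.aemeasurable : Measure (Set.Icc (-C) C)) = ∫ y, g y ∂ν :=
    integral_map measurable_gIcc.aemeasurable val.continuous.aestronglyMeasurable
  simpa only [integral_val] using ProbabilityMeasure.tendsto_iff_forall_integral_tendsto.1
    (tendsto_map_of_ae_continuousAt measurable_gIcc continuousAt_gIcc hμs) val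

end WeakConvergence

/-- Asymptotic invariance under `T`, along a filter, of a family of probability measures. It is
tested on all bounded measurable functions and not only on continuous ones, because precomposing a
continuous function with a discontinuous `T` leaves the latter class. -/
def AsymptoticallyInvariant {ι Y : Type*} [MeasurableSpace Y] (T : Y → Y) (l : Filter ι)
    (μs : ι → ProbabilityMeasure Y) : Prop :=
  ∀ (g : Y → ℝ) (C : ℝ), Measurable g → (∀ y, |g y| ≤ C) →
    Tendsto (fun i ↦ ∫ y, g (T y) ∂(μs i : Measure Y) - ∫ y, g y ∂(μs i : Measure Y)) l (𝓝 0)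

namespace AsymptoticallyInvariant

open TopologicalSpace

variable {ι Y Ω : Type*} [TopologicalSpace Y] [PseudoMetrizableSpace Y] [SeparableSpace Y]
  [MeasurableSpace Y] [OpensMeasurableSpace Y] [TopologicalSpace Ω] [HasOuterApproxClosed Ω]
  [MeasurableSpace Ω] [BorelSpace Ω] {T : Y → Y} {l : Filter ι} {μs : ι → ProbabilityMeasure Y}
  {μ : ProbabilityMeasure Y}

theorem integral_comp_eq (h : AsymptoticallyInvariant T l μs) (hμ : MapClusterPt μ l μs)
    (hT : Measurable T) {g : Y → ℝ} {C : ℝ} (hg : Measurable g) (hC : ∀ y, |g y| ≤ C)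
    (hgc : ∀ᵐ y ∂(μ : Measure Y), ContinuousAt g y)
    (hgTc : ∀ᵐ y ∂(μ : Measure Y), ContinuousAt (g ∘ T) y) :
    ∫ y, g (T y) ∂(μ : Measure Y) = ∫ y, g y ∂(μ : Measure Y) := by
  have hcont : ContinuousAt (fun ν : ProbabilityMeasure Y ↦
      ∫ y, g (T y) ∂(ν : Measure Y) - ∫ y, g y ∂(ν : Measure Y)) μ :=
    (tendsto_integral_of_ae_continuousAt (hg.comp hT) (fun y ↦ hC (T y)) hgTc tendsto_id).sub
      (tendsto_integral_of_ae_continuousAt hg hC hgc tendsto_id)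
  have hcluster := hμ.continuousAt_comp hcont
  exact sub_eq_zero.1 (eq_of_mapClusterPt_of_tendsto hcluster (h g C hg hC))

theorem map_comp_eq_map (h : AsymptoticallyInvariant T l μs) (hμ : MapClusterPt μ l μs)
    (hT : Measurable T) {r : Y → Ω} (hr : Measurable r)
    (hrc : ∀ᵐ y ∂(μ : Measure Y), ContinuousAt r y)
    (hrTc : ∀ᵐ y ∂(μ : Measure Y), ContinuousAt (r ∘ T) y) :
    (μ : Measure Y).map (r ∘ T) = (μ : Measure Y).map r := by
  have hrT : Measurable (r ∘ T) := hr.comp hT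
  have := Measure.isProbabilityMeasure_map (μ := (μ : Measure Y)) hr.aemeasurable
  have := Measure.isProbabilityMeasure_map (μ := (μ : Measure Y)) hrT.aemeasurable
  refine ext_of_forall_integral_eq_of_IsFiniteMeasure fun g ↦ ?_
  rw [integral_map hr.aemeasurable g.continuous.aestronglyMeasurable,
    integral_map hrT.aemeasurable g.continuous.aestronglyMeasurable]
  exact h.integral_comp_eq hμ hT (g := g ∘ r) (g.continuous.measurable.comp hr)
    (fun y ↦ g.norm_coe_le_norm (r y)) (hrc.mono fun _ hy ↦ g.continuous.continuousAt.comp hy)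
    (hrTc.mono fun _ hy ↦ g.continuous.continuousAt.comp hy)

theorem measurePreserving_of_semiconj (h : AsymptoticallyInvariant T l μs)
    (hμ : MapClusterPt μ l μs) (hT : Measurable T) {π : Y → Ω} (hπ : Continuous π) {φ : Ω → Ω}
    (hφ : Continuous φ) (hsemi : Function.Semiconj π T φ) :
    MeasurePreserving φ ((μ : Measure Y).map π) ((μ : Measure Y).map π) := by
  refine ⟨hφ.measurable, ?_⟩
  have hπT : Continuous (π ∘ T) := hsemi.comp_eq ▸ hφ.comp hπ
  rw [Measure.map_map hφ.measurable hπ.measurable, ← hsemi.comp_eq]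
  exact h.map_comp_eq_map hμ hT hπ.measurable (.of_forall fun _ ↦ hπ.continuousAt)
    (.of_forall fun _ ↦ hπT.continuousAt)

theorem measurePreserving_of_ae_continuousAt [BorelSpace Y] (h : AsymptoticallyInvariant T l μs)
    (hμ : MapClusterPt μ l μs) (hT : Measurable T)
    (hTc : ∀ᵐ y ∂(μ : Measure Y), ContinuousAt T y) :
    MeasurePreserving T (μ : Measure Y) (μ : Measure Y) :=
  ⟨hT, (h.map_comp_eq_map hμ hT measurable_id (.of_forall fun _ ↦ continuousAt_id) hTc).trans
    Measure.map_id⟩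

theorem measurePreserving_of_factor [BorelSpace Y] (h : AsymptoticallyInvariant T l μs)
    (hμ : MapClusterPt μ l μs) (hT : Measurable T) {π : Y → Ω} (hπ : Continuous π) {φ : Ω → Ω}
    (hφ : Continuous φ) (hsemi : Function.Semiconj π T φ)
    (hH : ∀ ν : Measure Ω, IsProbabilityMeasure ν → MeasurePreserving φ ν ν →
      ν (π '' {y | ¬ ContinuousAt T y}) = 0) :
    MeasurePreserving T (μ : Measure Y) (μ : Measure Y) := by
  have hnull : (μ : Measure Y).map π (π '' {y | ¬ ContinuousAt T y}) = 0 :=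
    hH _ (Measure.isProbabilityMeasure_map hπ.aemeasurable)
      (h.measurePreserving_of_semiconj hμ hT hπ hφ hsemi)
  refine h.measurePreserving_of_ae_continuousAt hμ hT ?_
  exact measure_mono_null (Set.subset_preimage_image π _)
    (Measure.preimage_null_of_map_null hπ.aemeasurable hnull)

end AsymptoticallyInvariant

theorem birkhoffAverage_comp_self {α M : Type*} (R : Type*) [DivisionSemiring R]
    [AddCommMonoid M] [Module R M] (T : α → α) (g : α → M) (n : ℕ) (x : α) :
    birkhoffAverage R T (g ∘ T) n x = birkhoffAverage R T g n (T x) := by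
  simp only [birkhoffAverage, birkhoffSum, Function.comp_apply, ← Function.iterate_succ_apply,
    Function.iterate_succ_apply']

section EmpiricalMeasure

variable {Y : Type*} [MeasurableSpace Y]

/-- The empirical measure of the orbit segment `y, T y, …, T^[n] y`. It has `n + 1` points, so that
it is a probability measure for every `n`. -/
noncomputable def empiricalMeasure (T : Y → Y) (n : ℕ) (y : Y) : ProbabilityMeasure Y :=
  ⟨((n + 1 : ℕ) : ENNReal)⁻¹ • ∑ i ∈ Finset.range (n + 1), Measure.dirac (T^[i] y),
    ⟨by simp [ENNReal.inv_mul_cancel]⟩⟩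

theorem integral_empiricalMeasure (T : Y → Y) (n : ℕ) (y : Y) {g : Y → ℝ} (hg : Measurable g) :
    ∫ x, g x ∂(empiricalMeasure T n y : Measure Y) = birkhoffAverage ℝ T g (n + 1) y := by
  have hint (x : Y) : Integrable g (Measure.dirac x) :=
    integrable_dirac' hg.stronglyMeasurable (by simp)
  rw [empiricalMeasure, ProbabilityMeasure.coe_mk, integral_smul_measure,
    integral_finsetSum_measure fun i _ ↦ hint _, ENNReal.toReal_inv, ENNReal.toReal_natCast]
  simp [integral_dirac' _ _ hg.stronglyMeasurable, birkhoffAverage, birkhoffSum]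

theorem abs_integral_comp_sub_integral_empiricalMeasure_le {T : Y → Y} (hT : Measurable T)
    (n : ℕ) (y : Y) {g : Y → ℝ} {C : ℝ} (hg : Measurable g) (hC : ∀ x, |g x| ≤ C) :
    |∫ x, g (T x) ∂(empiricalMeasure T n y : Measure Y) -
      ∫ x, g x ∂(empiricalMeasure T n y : Measure Y)| ≤ 2 * C / (n + 1 : ℕ) := by
  have hcomp : ∫ x, g (T x) ∂(empiricalMeasure T n y : Measure Y) =
      birkhoffAverage ℝ T g (n + 1) (T y) :=
    (integral_empiricalMeasure T n y (hg.comp hT)).trans (birkhoffAverage_comp_self ℝ T g _ y)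
  rw [hcomp, integral_empiricalMeasure T n y hg, ← Real.dist_eq,
    dist_birkhoffAverage_apply_birkhoffAverage, Real.dist_eq]
  gcongr
  calc |g (T^[n + 1] y) - g y| ≤ |g (T^[n + 1] y)| + |g y| := abs_sub _ _
    _ ≤ 2 * C := by linarith [hC (T^[n + 1] y), hC y]

theorem asymptoticallyInvariant_empiricalMeasure {T : Y → Y} (hT : Measurable T) :
    AsymptoticallyInvariant T (atTop ×ˢ ⊤) (fun q : ℕ × Y ↦ empiricalMeasure T q.1 q.2) := by
  intro g C hg hC
  have hzero : Tendsto (fun n : ℕ ↦ 2 * C / (n + 1 : ℕ)) atTop (𝓝 0) :=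
    (tendsto_add_atTop_iff_nat 1).2 (tendsto_const_div_atTop_nhds_zero_nat (2 * C))
  exact squeeze_zero_norm
    (fun q ↦ abs_integral_comp_sub_integral_empiricalMeasure_le hT q.1 q.2 hg hC)
    (hzero.comp tendsto_fst)

end EmpiricalMeasure

theorem uniform_ergodic_theorem_SPT_general {Y Ω : Type*}
    [TopologicalSpace Y] [CompactSpace Y] [TopologicalSpace.MetrizableSpace Y]
    [MeasurableSpace Y] [BorelSpace Y]
    [TopologicalSpace Ω] [HasOuterApproxClosed Ω] [MeasurableSpace Ω] [BorelSpace Ω]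
    {φ : Ω → Ω} (hφ : Continuous φ) {T : Y → Y} (hT : Measurable T)
    {π : Y → Ω} (hπ : Continuous π) (hsemi : Function.Semiconj π T φ)
    (hH : ∀ ν : Measure Ω, IsProbabilityMeasure ν → MeasurePreserving φ ν ν →
      ν (π '' {y | ¬ ContinuousAt T y}) = 0)
    {a : ℝ} {f : Y → ℝ} (hf : Measurable f) (hfb : ∃ C : ℝ, ∀ y, |f y| ≤ C)
    (hfinv : ∀ μ : Measure Y, IsProbabilityMeasure μ → MeasurePreserving T μ μ →
      μ {y | ¬ ContinuousAt f y} = 0 ∧ ∫ y, f y ∂μ = a) :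
    TendstoUniformly (birkhoffAverage ℝ T f) (fun _ ↦ a) atTop := by
  obtain ⟨C, hC⟩ := hfb
  have hcluster (μ : ProbabilityMeasure Y)
      (hμ : MapClusterPt μ (atTop ×ˢ ⊤) fun q : ℕ × Y ↦ empiricalMeasure T q.1 q.2) :
      Tendsto (fun ν : ProbabilityMeasure Y ↦ ∫ y, f y ∂(ν : Measure Y)) (𝓝 μ) (𝓝 a) := by
    have hμT := (asymptoticallyInvariant_empiricalMeasure hT).measurePreserving_of_factor hμ hT
      hπ hφ hsemi hH
    obtain ⟨hfc, hfa⟩ := hfinv μ inferInstance hμT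
    exact hfa ▸ tendsto_integral_of_ae_continuousAt hf hC hfc tendsto_id
  have hshift : TendstoUniformly (fun n ↦ birkhoffAverage ℝ T f (n + 1)) (fun _ ↦ a) atTop := by
    refine tendsto_prod_top_iff.1 ((tendsto_comp_of_forall_mapClusterPt hcluster).congr ?_)
    exact fun q ↦ integral_empiricalMeasure T q.1 q.2 hf
  rw [← map_add_atTop_eq_nat 1]
  exact hshift

/-- Uniform ergodic theorem for skew-product transformations with
discontinuous observation functions. -/
theorem uniform_ergodic_theorem_SPT
    {Ω X : Type*}
    [MetricSpace Ω] [CompactSpace Ω] [MeasurableSpace Ω] [BorelSpace Ω]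
    [MetricSpace X] [CompactSpace X] [MeasurableSpace X] [BorelSpace X]
    (φ : Ω → Ω) (hφ : Continuous φ)
    (Φ : Ω × X → Ω × X) (hΦmeas : Measurable Φ)
    (hbase : ∀ p : Ω × X, (Φ p).1 = φ p.1)
    (hH : ∀ ν : Measure Ω, IsProbabilityMeasure ν →
      (∀ s : Set Ω, MeasurableSet s → ν (φ ⁻¹' s) = ν s) →
      ν (Prod.fst '' {p : Ω × X | ¬ ContinuousAt Φ p}) = 0)
    (a : ℝ) (f : Ω × X → ℝ) (hfmeas : Measurable f)
    (hfbdd : ∃ C : ℝ, ∀ p, |f p| ≤ C)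
    (hf : ∀ μ : Measure (Ω × X), IsProbabilityMeasure μ →
      (∀ s : Set (Ω × X), MeasurableSet s → μ (Φ ⁻¹' s) = μ s) →
      μ {p : Ω × X | ¬ ContinuousAt f p} = 0 ∧ ∫ p, f p ∂μ = a) :
    TendstoUniformly
      (fun (n : ℕ) (p : Ω × X) => (n : ℝ)⁻¹ * ∑ i ∈ Finset.range n, f (Φ^[i] p))
      (fun _ => a) atTop :=
  uniform_ergodic_theorem_SPT_general hφ hΦmeas continuous_fst hbase
    (fun ν hν hφν ↦ hH ν hν fun _ hs ↦ hφν.measure_preimage hs.nullMeasurableSet) hfmeas hfbdd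
    fun μ hμ hΦμ ↦ hf μ hμ fun _ hs ↦ hΦμ.measure_preimage hs.nullMeasurableSet
end

section
/- Let Ω and X be compact metric spaces and let Φ be a skew-product transformation on Ω×X with continuous base φ: Ω → Ω satisfying condition (H). Then the set M(Ω×X, Φ) of Φ-invariant Borel probability measures on Ω×X is a compact subset of the space of Borel probability measures on Ω×X endowed with the weak* topology. -/
open MeasureTheory Filter Topology

/-!
A weak limit `μ` of `Φ`-invariant measures projects to a weak limit of `φ`-invariant measures, and
since `φ` is continuous this projection is again `φ`-invariant. Condition (H) then says that `Φ` is
continuous at `μ`-almost every point, which by the mapping theorem is enough for pushing forward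
along `Φ` to be compatible with the limit. So `μ` is `Φ`-invariant, and the invariant measures form
a closed set in the compact space of all probability measures.
-/

section MappingTheorem

variable {Y Z : Type*} [TopologicalSpace Y] [MeasurableSpace Y]
  [TopologicalSpace Z] {f : Y → Z}

theorem interior_preimage_ae_eq_of_ae_continuousAt {μ : Measure Y}
    (hf : ∀ᵐ y ∂μ, ContinuousAt f y) {G : Set Z} (hG : IsOpen G) :
    interior (f ⁻¹' G) =ᵐ[μ] f ⁻¹' G := by
  refine interior_subset.eventuallyLE.antisymm ?_
  filter_upwards [hf] with y hy hyG
  exact mem_interior_iff_mem_nhds.2 (hy.preimage_mem_nhds (hG.mem_nhds hyG))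

theorem tendsto_map_of_tendsto_of_ae_continuousAt [OpensMeasurableSpace Y] [HasOuterApproxClosed Y]
    [MeasurableSpace Z] [OpensMeasurableSpace Z] {ι : Type*} {L : Filter ι}
    [L.IsCountablyGenerated] {μs : ι → ProbabilityMeasure Y} {μ : ProbabilityMeasure Y}
    (hlim : Tendsto μs L (𝓝 μ)) (hfm : Measurable f)
    (hf : ∀ᵐ y ∂(μ : Measure Y), ContinuousAt f y) :
    Tendsto (fun i ↦ (μs i).map hfm.aemeasurable) L (𝓝 (μ.map hfm.aemeasurable)) := by
  refine tendsto_of_forall_isOpen_le_liminf' fun G hG ↦ ?_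
  simp only [ProbabilityMeasure.map_apply' _ hfm.aemeasurable hG.measurableSet]
  calc (μ : Measure Y) (f ⁻¹' G)
      = (μ : Measure Y) (interior (f ⁻¹' G)) :=
        (measure_congr (interior_preimage_ae_eq_of_ae_continuousAt hf hG)).symm
    _ ≤ L.liminf fun i ↦ (μs i : Measure Y) (interior (f ⁻¹' G)) :=
        ProbabilityMeasure.le_liminf_measure_open_of_tendsto hlim isOpen_interior
    _ ≤ L.liminf fun i ↦ (μs i : Measure Y) (f ⁻¹' G) :=
        liminf_le_liminf (Eventually.of_forall fun _ ↦ measure_mono interior_subset)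

end MappingTheorem

/-- The set `M(Y, T)` of `T`-invariant probability measures on `Y`. Invariance is expressed by
`MeasurePreserving`, so the set is empty when `T` is not measurable. -/
def invariantProbabilityMeasures {Y : Type*} [MeasurableSpace Y] (T : Y → Y) :
    Set (ProbabilityMeasure Y) :=
  {μ | MeasurePreserving T (μ : Measure Y) μ}

section Invariant

variable {Y : Type*} [MeasurableSpace Y] {T : Y → Y} {μ : ProbabilityMeasure Y}

theorem mem_invariantProbabilityMeasures_iff_forall_measure_preimage (hT : Measurable T) :
    μ ∈ invariantProbabilityMeasures T ↔
      ∀ s : Set Y, MeasurableSet s → (μ : Measure Y) (T ⁻¹' s) = (μ : Measure Y) s where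
  mp hμ _ hs := hμ.measure_preimage hs.nullMeasurableSet
  mpr h := ⟨hT, Measure.ext fun s hs ↦ (Measure.map_apply hT hs).trans (h s hs)⟩

theorem mem_invariantProbabilityMeasures_iff_map_eq (hT : Measurable T) :
    μ ∈ invariantProbabilityMeasures T ↔ μ.map hT.aemeasurable = μ where
  mp hμ := Subtype.ext hμ.map_eq
  mpr h := ⟨hT, congrArg Subtype.val h⟩

theorem map_mem_invariantProbabilityMeasures_of_semiconj {Z : Type*} [MeasurableSpace Z]
    {S : Z → Z} {π : Y → Z} (hμ : μ ∈ invariantProbabilityMeasures T) (hπ : Measurable π)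
    (hS : Measurable S) (hsemi : Function.Semiconj π T S) :
    μ.map hπ.aemeasurable ∈ invariantProbabilityMeasures S :=
  (hπ.measurePreserving (μ : Measure Y)).of_semiconj hμ hsemi hS

variable [TopologicalSpace Y] [HasOuterApproxClosed Y] [BorelSpace Y]

theorem isClosed_invariantProbabilityMeasures_of_continuous (hT : Continuous T) :
    IsClosed (invariantProbabilityMeasures T) := by
  have hfixed : invariantProbabilityMeasures T = {μ | μ.map hT.measurable.aemeasurable = μ} :=
    Set.ext fun _ ↦ mem_invariantProbabilityMeasures_iff_map_eq hT.measurable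
  exact hfixed ▸ isClosed_eq (ProbabilityMeasure.continuous_map hT) continuous_id

theorem mem_invariantProbabilityMeasures_of_tendsto {ι : Type*} {L : Filter ι} [L.NeBot]
    [L.IsCountablyGenerated] {μs : ι → ProbabilityMeasure Y} (hlim : Tendsto μs L (𝓝 μ))
    (hμs : ∀ᶠ i in L, μs i ∈ invariantProbabilityMeasures T) (hTm : Measurable T)
    (hT : ∀ᵐ y ∂(μ : Measure Y), ContinuousAt T y) :
    μ ∈ invariantProbabilityMeasures T := by
  simp only [mem_invariantProbabilityMeasures_iff_map_eq hTm] at hμs ⊢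
  have hmap : Tendsto μs L (𝓝 (μ.map hTm.aemeasurable)) :=
    (tendsto_map_of_tendsto_of_ae_continuousAt hlim hTm hT).congr' hμs
  exact tendsto_nhds_unique hmap hlim

end Invariant

section Semiconj

variable {Y Z : Type*} [TopologicalSpace Y] [MeasurableSpace Y] [BorelSpace Y]
  [TopologicalSpace Z] [HasOuterApproxClosed Z] [MeasurableSpace Z] [BorelSpace Z]
  {T : Y → Y} {S : Z → Z} {π : Y → Z}

theorem isClosed_invariantProbabilityMeasures_of_semiconj
    [TopologicalSpace.PseudoMetrizableSpace Y] [TopologicalSpace.SeparableSpace Y]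
    (hT : Measurable T) (hS : Continuous S) (hπ : Continuous π) (hsemi : Function.Semiconj π T S)
    (hnull : ∀ ν ∈ invariantProbabilityMeasures S,
      (ν : Measure Z) (π '' {y | ¬ ContinuousAt T y}) = 0) :
    IsClosed (invariantProbabilityMeasures T) := by
  refine IsSeqClosed.isClosed fun μs μ hμs hlim ↦ ?_
  have hproj : μ.map hπ.measurable.aemeasurable ∈ invariantProbabilityMeasures S :=
    (isClosed_invariantProbabilityMeasures_of_continuous hS).mem_of_tendsto
      (ProbabilityMeasure.tendsto_map_of_tendsto_of_continuous μs μ hlim hπ)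
      (Eventually.of_forall fun n ↦ map_mem_invariantProbabilityMeasures_of_semiconj (hμs n)
        hπ.measurable hS.measurable hsemi)
  have hcont : ∀ᵐ y ∂(μ : Measure Y), ContinuousAt T y :=
    measure_mono_null (Set.subset_preimage_image π _)
      (Measure.preimage_null_of_map_null hπ.measurable.aemeasurable (hnull _ hproj))
  exact mem_invariantProbabilityMeasures_of_tendsto hlim (Eventually.of_forall hμs) hT hcont

theorem invariant_measures_isCompact_SPT_general
    [CompactSpace Y] [TopologicalSpace.MetrizableSpace Y]
    (hT : Measurable T) (hS : Continuous S) (hπ : Continuous π) (hsemi : Function.Semiconj π T S)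
    (hnull : ∀ ν ∈ invariantProbabilityMeasures S,
      (ν : Measure Z) (π '' {y | ¬ ContinuousAt T y}) = 0) :
    IsCompact (invariantProbabilityMeasures T) :=
  (isClosed_invariantProbabilityMeasures_of_semiconj hT hS hπ hsemi hnull).isCompact

end Semiconj

/-- The set of invariant Borel probability measures of a skew-product
transformation satisfying condition (H) is compact in the weak* topology. -/
theorem invariant_measures_isCompact_SPT
    {Ω X : Type*}
    [MetricSpace Ω] [CompactSpace Ω] [MeasurableSpace Ω] [BorelSpace Ω]
    [MetricSpace X] [CompactSpace X] [MeasurableSpace X] [BorelSpace X]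
    (φ : Ω → Ω) (hφ : Continuous φ)
    (Φ : Ω × X → Ω × X) (hΦmeas : Measurable Φ)
    (hbase : ∀ p : Ω × X, (Φ p).1 = φ p.1)
    (hH : ∀ ν : Measure Ω, IsProbabilityMeasure ν →
      (∀ s : Set Ω, MeasurableSet s → ν (φ ⁻¹' s) = ν s) →
      ν (Prod.fst '' {p : Ω × X | ¬ ContinuousAt Φ p}) = 0) :
    IsCompact {μ : ProbabilityMeasure (Ω × X) |
      ∀ s : Set (Ω × X), MeasurableSet s →
        (μ : Measure (Ω × X)) (Φ ⁻¹' s) = (μ : Measure (Ω × X)) s} := by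
  simp only [← mem_invariantProbabilityMeasures_iff_forall_measure_preimage hΦmeas]
  exact invariant_measures_isCompact_SPT_general hΦmeas hφ continuous_fst hbase fun ν hν ↦
    hH ν inferInstance
      ((mem_invariantProbabilityMeasures_iff_forall_measure_preimage hφ.measurable).1 hν)
end

section
/- Let Ω and X be compact metric spaces and let Φ be a skew-product transformation on Ω×X with continuous base φ: Ω → Ω satisfying condition (H). Then a measure μ ∈ M(Ω×X, Φ) is an extreme point of the convex set M(Ω×X, Φ) if and only if μ is ergodic under Φ. -/
open MeasureTheory Filter Topology NNReal

/-!
If `B` is invariant with `0 < μ B < 1`, then `μ` is a proper convex combination of its conditional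
measures on `B` and `Bᶜ`, so an extreme invariant measure is ergodic. Conversely, if `μ` is ergodic
and `μ = t • μ₁ + (1 - t) • μ₂`, then `μᵢ ≪ μ` has an invariant, hence constant, density, and
`μ₁ = μ = μ₂`. Mathlib has this as `Ergodic.iff_mem_extremePoints` for convex combinations with
coefficients in `ℝ≥0∞`; these sum to one, so they are finite and of the form `t`, `1 - t`
with `t : ℝ≥0`.
-/

open scoped ENNReal

section ExtremePoints

theorem openSegment_eq_image_tsub {𝕜 E : Type*} [Semiring 𝕜] [PartialOrder 𝕜]
    [CanonicallyOrderedAdd 𝕜] [Sub 𝕜] [OrderedSub 𝕜] [IsOrderedCancelAddMonoid 𝕜]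
    [AddCommMonoid E] [SMul 𝕜 E] (x y : E) :
    openSegment 𝕜 x y = (fun t : 𝕜 ↦ t • x + (1 - t) • y) '' Set.Ioo 0 1 := by
  ext z
  constructor
  · rintro ⟨a, b, ha, hb, hab, rfl⟩
    have ha_lt : a < 1 := hab ▸ lt_add_of_pos_right a hb
    have hb_eq : 1 - a = b := by rw [← hab, add_tsub_cancel_left]
    exact ⟨a, ⟨ha, ha_lt⟩, by simp only [hb_eq]⟩
  · rintro ⟨t, ⟨ht_pos, ht_lt⟩, rfl⟩
    exact ⟨t, 1 - t, ht_pos, tsub_pos_of_lt ht_lt, add_tsub_cancel_of_le ht_lt.le, rfl⟩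

theorem openSegment_ennreal_eq_openSegment_nnreal {E : Type*} [AddCommMonoid E] [MulAction ℝ≥0∞ E]
    [SMul ℝ≥0 E] [IsScalarTower ℝ≥0 ℝ≥0∞ E] (x y : E) :
    openSegment ℝ≥0∞ x y = openSegment ℝ≥0 x y := by
  have coe_smul (c : ℝ≥0) (z : E) : (c : ℝ≥0∞) • z = c • z := by
    rw [← smul_one_smul ℝ≥0∞ c z, ENNReal.smul_def, smul_eq_mul, mul_one]
  ext z
  constructor
  · rintro ⟨a, b, ha, hb, hab, rfl⟩
    have hab_ne_top : a + b ≠ ∞ := hab ▸ ENNReal.one_ne_top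
    lift a to ℝ≥0 using (ENNReal.add_ne_top.1 hab_ne_top).1
    lift b to ℝ≥0 using (ENNReal.add_ne_top.1 hab_ne_top).2
    exact ⟨a, b, mod_cast ha, mod_cast hb, mod_cast hab, by simp only [coe_smul]⟩
  · rintro ⟨a, b, ha, hb, hab, rfl⟩
    exact ⟨a, b, mod_cast ha, mod_cast hb, mod_cast hab, by simp only [coe_smul]⟩

theorem mem_extremePoints_iff_forall_openSegment_eq {𝕜 E : Type*} [Semiring 𝕜] [PartialOrder 𝕜]
    [AddCommMonoid E] [Module 𝕜 E] {A : Set E} {x : E} :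
    x ∈ A.extremePoints 𝕜 ↔ x ∈ A ∧ ∀ y ∈ A, ∀ z ∈ A, x ∈ openSegment 𝕜 y z → y = z := by
  rw [mem_extremePoints]
  refine and_congr_right fun _ ↦ ⟨fun h y hy z hz hx ↦ ?_, fun h y hy z hz hx ↦ ?_⟩
  · obtain ⟨rfl, rfl⟩ := h y hy z hz hx
    rfl
  · obtain rfl := h y hy z hz hx
    obtain ⟨a, b, -, -, hab, rfl⟩ := hx
    rw [Convex.combo_self hab]
    exact ⟨rfl, rfl⟩

theorem mem_extremePoints_ennreal_iff {E : Type*} [AddCommMonoid E] [Module ℝ≥0∞ E]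
    [SMul ℝ≥0 E] [IsScalarTower ℝ≥0 ℝ≥0∞ E] {A : Set E} {x : E} :
    x ∈ A.extremePoints ℝ≥0∞ ↔ x ∈ A ∧ ∀ y ∈ A, ∀ z ∈ A, ∀ t : ℝ≥0, 0 < t → t < 1 →
      x = t • y + (1 - t) • z → y = z := by
  simp only [mem_extremePoints_iff_forall_openSegment_eq,
    openSegment_ennreal_eq_openSegment_nnreal, openSegment_eq_image_tsub, Set.mem_image,
    Set.mem_Ioo, forall_exists_index, and_imp, eq_comm (a := x)]

end ExtremePoints

section InvariantMeasures

variable {α β : Type*} [MeasurableSpace α] [MeasurableSpace β]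

theorem measurePreserving_iff_forall_measure_preimage_eq {f : α → β} (hf : Measurable f)
    {μ : Measure α} {ν : Measure β} :
    MeasurePreserving f μ ν ↔ ∀ s, MeasurableSet s → μ (f ⁻¹' s) = ν s := by
  refine ⟨fun h s hs ↦ h.measure_preimage hs.nullMeasurableSet, fun h ↦ ⟨hf, ?_⟩⟩
  ext s hs
  rw [Measure.map_apply hf hs, h s hs]

theorem preErgodic_iff_forall_prob_eq_zero_or_one {f : α → α} {μ : Measure α}
    [IsProbabilityMeasure μ] :
    PreErgodic f μ ↔ ∀ s, MeasurableSet s → f ⁻¹' s = s → μ s = 0 ∨ μ s = 1 := by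
  refine ⟨fun h s hs hfs ↦ h.prob_eq_zero_or_one hs hfs, fun h ↦ ⟨fun s hs hfs ↦ ?_⟩⟩
  rw [eventuallyConst_set']
  simpa [hs] using h s hs hfs

end InvariantMeasures

theorem extreme_iff_ergodic_SPT_general {α : Type*} [MeasurableSpace α] {f : α → α}
    (hf : Measurable f) {μ : Measure α} [IsProbabilityMeasure μ]
    (hμ : ∀ s, MeasurableSet s → μ (f ⁻¹' s) = μ s) :
    (∀ (μ₁ μ₂ : Measure α) (t : ℝ≥0),
        IsProbabilityMeasure μ₁ → (∀ s, MeasurableSet s → μ₁ (f ⁻¹' s) = μ₁ s) →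
        IsProbabilityMeasure μ₂ → (∀ s, MeasurableSet s → μ₂ (f ⁻¹' s) = μ₂ s) →
        0 < t → t < 1 → μ = t • μ₁ + (1 - t) • μ₂ → μ₁ = μ₂)
      ↔ ∀ B, MeasurableSet B → f ⁻¹' B = B → μ B = 0 ∨ μ B = 1 := by
  have hμ_preserving : MeasurePreserving f μ μ :=
    (measurePreserving_iff_forall_measure_preimage_eq hf).2 hμ
  calc
    _ ↔ μ ∈ Set.extremePoints ℝ≥0∞ {ν | MeasurePreserving f ν ν ∧ IsProbabilityMeasure ν} := by
      simp only [mem_extremePoints_ennreal_iff, Set.mem_ofPred_eq,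
        measurePreserving_iff_forall_measure_preimage_eq hf]
      exact ⟨fun h ↦ ⟨⟨hμ, ‹_›⟩, fun μ₁ ⟨hμ₁, hprob₁⟩ μ₂ ⟨hμ₂, hprob₂⟩ t ↦
          h μ₁ μ₂ t hprob₁ hμ₁ hprob₂ hμ₂⟩,
        fun h μ₁ μ₂ t hprob₁ hμ₁ hprob₂ hμ₂ ↦ h.2 μ₁ ⟨hμ₁, hprob₁⟩ μ₂ ⟨hμ₂, hprob₂⟩ t⟩
    _ ↔ Ergodic f μ := Ergodic.iff_mem_extremePoints.symm
    _ ↔ PreErgodic f μ := ⟨Ergodic.toPreErgodic, fun h ↦ ⟨hμ_preserving, h⟩⟩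
    _ ↔ _ := preErgodic_iff_forall_prob_eq_zero_or_one

/-- For a skew-product transformation satisfying condition (H), an invariant
Borel probability measure is an extreme point of the set of invariant Borel
probability measures if and only if it is ergodic. -/
theorem extreme_iff_ergodic_SPT
    {Ω X : Type*}
    [MetricSpace Ω] [CompactSpace Ω] [MeasurableSpace Ω] [BorelSpace Ω]
    [MetricSpace X] [CompactSpace X] [MeasurableSpace X] [BorelSpace X]
    (φ : Ω → Ω) (hφ : Continuous φ)
    (Φ : Ω × X → Ω × X) (hΦmeas : Measurable Φ)
    (hbase : ∀ p : Ω × X, (Φ p).1 = φ p.1)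
    (hH : ∀ ν : Measure Ω, IsProbabilityMeasure ν →
      (∀ s : Set Ω, MeasurableSet s → ν (φ ⁻¹' s) = ν s) →
      ν (Prod.fst '' {p : Ω × X | ¬ ContinuousAt Φ p}) = 0)
    (μ : Measure (Ω × X)) (hμprob : IsProbabilityMeasure μ)
    (hμinv : ∀ s : Set (Ω × X), MeasurableSet s → μ (Φ ⁻¹' s) = μ s) :
    (∀ (μ₁ μ₂ : Measure (Ω × X)) (t : ℝ≥0),
        IsProbabilityMeasure μ₁ →
        (∀ s : Set (Ω × X), MeasurableSet s → μ₁ (Φ ⁻¹' s) = μ₁ s) →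
        IsProbabilityMeasure μ₂ →
        (∀ s : Set (Ω × X), MeasurableSet s → μ₂ (Φ ⁻¹' s) = μ₂ s) →
        0 < t → t < 1 → μ = t • μ₁ + (1 - t) • μ₂ → μ₁ = μ₂)
      ↔ (∀ B : Set (Ω × X), MeasurableSet B → Φ ⁻¹' B = B → μ B = 0 ∨ μ B = 1) :=
  extreme_iff_ergodic_SPT_general hΦmeas hμinv
end

section
/- Let Ω and X be compact metric spaces and let Φ be a skew-product transformation on Ω×X with continuous base φ: Ω → Ω satisfying condition (H). Let (ω_k, x_k) be points of Ω×X and n_k → ∞ integers, and set μ_k = (1/n_k) Σ_{i=0}^{n_k−1} Φ^i_* δ_{(ω_k,x_k)}, where δ_p is the Dirac measure at p. If μ_k converges in the weak* topology to a Borel probability measure μ' on Ω×X, then μ' is Φ-invariant. -/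
open MeasureTheory Filter Topology ENNReal

/-!
The averages `μ_k` are asymptotically invariant: `Φ_* μ_k - μ_k` telescopes to a measure of total
variation at most `2 / n_k`, so `μ_k` and `Φ_* μ_k` have the same weak limit `μ'`. If `Φ` is
continuous `μ'`-almost everywhere, then also `Φ_* μ_k → Φ_* μ'`, whence `Φ_* μ' = μ'`. Applied to
the projected measures and the continuous base map, the same reasoning shows that `π_* μ'` is
`φ`-invariant, so condition (H) makes `π(D_Φ)` null for `π_* μ'`, and therefore `D_Φ` null for `μ'`.
-/

theorem closure_preimage_subset_union_setOf_not_continuousAt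
    {Y Z : Type*} [TopologicalSpace Y] [TopologicalSpace Z] (T : Y → Z) {F : Set Z}
    (hF : IsClosed F) : closure (T ⁻¹' F) ⊆ T ⁻¹' F ∪ {y | ¬ ContinuousAt T y} := by
  intro y hy
  refine or_iff_not_imp_right.2 fun hcont => ?_
  have hTy : T y ∈ closure F :=
    (not_not.1 hcont).continuousWithinAt.mem_closure hy (Set.mapsTo_preimage T F)
  rwa [hF.closure_eq] at hTy

section WeakLimits

variable {ι Y Z : Type*} {l : Filter ι}
  [TopologicalSpace Y] [MeasurableSpace Y] [TopologicalSpace Z] [MeasurableSpace Z]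

theorem tendsto_map_of_tendsto_of_ae_continuousAt_s11 [l.IsCountablyGenerated]
    [OpensMeasurableSpace Y] [HasOuterApproxClosed Y] [OpensMeasurableSpace Z]
    {μs : ι → ProbabilityMeasure Y} {μ : ProbabilityMeasure Y} (hμs : Tendsto μs l (𝓝 μ))
    {T : Y → Z} (hT : Measurable T) (hcont : ∀ᵐ y ∂(μ : Measure Y), ContinuousAt T y) :
    Tendsto (fun k => (μs k).map hT.aemeasurable) l (𝓝 (μ.map hT.aemeasurable)) := by
  refine tendsto_of_forall_isClosed_limsup_le' fun F hF => ?_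
  simp only [ProbabilityMeasure.map_apply' _ _ hF.measurableSet]
  calc limsup (fun k => (μs k : Measure Y) (T ⁻¹' F)) l
      ≤ limsup (fun k => (μs k : Measure Y) (closure (T ⁻¹' F))) l :=
        limsup_le_limsup (.of_forall fun _ => measure_mono subset_closure)
    _ ≤ (μ : Measure Y) (closure (T ⁻¹' F)) :=
        ProbabilityMeasure.limsup_measure_closed_le_of_tendsto hμs isClosed_closure
    _ ≤ (μ : Measure Y) (T ⁻¹' F ∪ {y | ¬ ContinuousAt T y}) :=
        measure_mono (closure_preimage_subset_union_setOf_not_continuousAt T hF)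
    _ = (μ : Measure Y) (T ⁻¹' F) := measure_congr (union_ae_eq_left_of_ae_eq_empty
        (ae_eq_empty.2 (ae_iff.1 hcont)))

variable [l.NeBot] [l.IsCountablyGenerated]
  {T : Y → Y} {μs : ι → ProbabilityMeasure Y} {μ : ProbabilityMeasure Y}

theorem measurePreserving_of_tendsto_of_tendsto_map [BorelSpace Y] [HasOuterApproxClosed Y]
    (hT : Measurable T) (hμs : Tendsto μs l (𝓝 μ))
    (hmap : Tendsto (fun k => (μs k).map hT.aemeasurable) l (𝓝 μ))
    (hcont : ∀ᵐ y ∂(μ : Measure Y), ContinuousAt T y) :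
    MeasurePreserving T (μ : Measure Y) μ := by
  have hmap_eq : μ.map hT.aemeasurable = μ :=
    tendsto_nhds_unique (tendsto_map_of_tendsto_of_ae_continuousAt_s11 hμs hT hcont) hmap
  exact ⟨hT, congrArg ProbabilityMeasure.toMeasure hmap_eq⟩

variable [BorelSpace Z] [HasOuterApproxClosed Z] {π : Y → Z} {φ : Z → Z}

theorem measurePreserving_map_of_semiconj_of_tendsto_map [OpensMeasurableSpace Y]
    (hπ : Continuous π) (hφ : Continuous φ) (hT : Measurable T)
    (hsemi : Function.Semiconj π T φ) (hμs : Tendsto μs l (𝓝 μ))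
    (hmap : Tendsto (fun k => (μs k).map hT.aemeasurable) l (𝓝 μ)) :
    MeasurePreserving φ ((μ : Measure Y).map π) ((μ : Measure Y).map π) := by
  have hπμs := ProbabilityMeasure.tendsto_map_of_tendsto_of_continuous _ _ hμs hπ
  have hπmap := ProbabilityMeasure.tendsto_map_of_tendsto_of_continuous _ _ hmap hπ
  refine measurePreserving_of_tendsto_of_tendsto_map hφ.measurable hπμs
    (hπmap.congr fun k => Subtype.ext ?_) (.of_forall fun _ => hφ.continuousAt)
  simp only [ProbabilityMeasure.val_eq_to_measure, ProbabilityMeasure.toMeasure_map,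
    Measure.map_map hπ.measurable hT, Measure.map_map hφ.measurable hπ.measurable,
    hsemi.comp_eq]

theorem measurePreserving_of_semiconj_of_tendsto_map [BorelSpace Y] [HasOuterApproxClosed Y]
    (hπ : Continuous π) (hφ : Continuous φ) (hT : Measurable T)
    (hsemi : Function.Semiconj π T φ)
    (hnull : ∀ ν : Measure Z, IsProbabilityMeasure ν → MeasurePreserving φ ν ν →
      ν (π '' {y | ¬ ContinuousAt T y}) = 0)
    (hμs : Tendsto μs l (𝓝 μ))
    (hmap : Tendsto (fun k => (μs k).map hT.aemeasurable) l (𝓝 μ)) :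
    MeasurePreserving T (μ : Measure Y) μ := by
  have himage : (μ : Measure Y).map π (π '' {y | ¬ ContinuousAt T y}) = 0 :=
    hnull _ (Measure.isProbabilityMeasure_map hπ.aemeasurable)
      (measurePreserving_map_of_semiconj_of_tendsto_map hπ hφ hT hsemi hμs hmap)
  have hcont : ∀ᵐ y ∂(μ : Measure Y), ContinuousAt T y :=
    measure_mono_null (Set.subset_preimage_image π _)
      (Measure.preimage_null_of_map_null hπ.aemeasurable himage)
  exact measurePreserving_of_tendsto_of_tendsto_map hT hμs hmap hcont

end WeakLimits

section CesaroPushforward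

variable {Y : Type*} [MeasurableSpace Y] {T : Y → Y} {n : ℕ} {ν : Measure Y}

/-- The Krylov–Bogolyubov average `(1/n) ∑_{i < n} T^i_* ν`; for a Dirac measure `ν` it is the
empirical measure of an orbit segment of length `n`. At `n = 0` it is the zero measure. -/
noncomputable def cesaroPushforward (T : Y → Y) (n : ℕ) (ν : Measure Y) : Measure Y :=
  (n : ℝ≥0∞)⁻¹ • ∑ i ∈ Finset.range n, ν.map T^[i]

theorem isProbabilityMeasure_cesaroPushforward [IsProbabilityMeasure ν] (hT : Measurable T)
    (hn : n ≠ 0) : IsProbabilityMeasure (cesaroPushforward T n ν) := by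
  have hmass (i : ℕ) : ν.map T^[i] Set.univ = 1 := by
    rw [Measure.map_apply (hT.iterate i) .univ, Set.preimage_univ, measure_univ]
  constructor
  simp only [cesaroPushforward, Measure.smul_apply, Measure.finsetSum_apply, hmass,
    Finset.sum_const, Finset.card_range, nsmul_eq_mul, mul_one, smul_eq_mul]
  exact ENNReal.inv_mul_cancel (Nat.cast_ne_zero.2 hn) (natCast_ne_top n)

/-- The telescoping identity, with both sides moved so that no subtraction of measures occurs. -/
theorem map_cesaroPushforward_add (hT : Measurable T) (n : ℕ) (ν : Measure Y) :
    (cesaroPushforward T n ν).map T + (n : ℝ≥0∞)⁻¹ • ν =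
      cesaroPushforward T n ν + (n : ℝ≥0∞)⁻¹ • ν.map T^[n] := by
  have hmap : (∑ i ∈ Finset.range n, ν.map T^[i]).map T =
      ∑ i ∈ Finset.range n, ν.map T^[i + 1] := by
    simp only [← Measure.mapₗ_apply_of_measurable hT, map_sum]
    simp only [Measure.mapₗ_apply_of_measurable hT, Measure.map_map hT (hT.iterate _),
      Function.iterate_succ']
  have htelescope : ∑ i ∈ Finset.range n, ν.map T^[i + 1] + ν =
      ∑ i ∈ Finset.range n, ν.map T^[i] + ν.map T^[n] := by
    rw [← Finset.sum_range_succ, Finset.sum_range_succ', Function.iterate_zero, Measure.map_id]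
  rw [cesaroPushforward, Measure.map_smul, hmap, ← smul_add, ← smul_add, htelescope]

theorem norm_integral_map_sub_integral_cesaroPushforward_le {E : Type*} [NormedAddCommGroup E]
    [NormedSpace ℝ E] [IsProbabilityMeasure ν] (hT : Measurable T) (hn : n ≠ 0) {g : Y → E}
    (hg : StronglyMeasurable g) {C : ℝ} (hC : ∀ y, ‖g y‖ ≤ C) :
    ‖∫ y, g y ∂(cesaroPushforward T n ν).map T - ∫ y, g y ∂cesaroPushforward T n ν‖ ≤
      2 * C / n := by
  have hprob := isProbabilityMeasure_cesaroPushforward (ν := ν) hT hn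
  have hprob_map := Measure.isProbabilityMeasure_map (μ := ν) (hT.iterate n).aemeasurable
  have hinv : (n : ℝ≥0∞)⁻¹ ≠ ∞ := ENNReal.inv_ne_top.2 (Nat.cast_ne_zero.2 hn)
  have hint (m : Measure Y) [IsFiniteMeasure m] : Integrable g m :=
    .of_bound hg.aestronglyMeasurable C (.of_forall hC)
  have hbound (m : Measure Y) [IsProbabilityMeasure m] : ‖∫ y, g y ∂m‖ ≤ C := by
    simpa using norm_integral_le_of_norm_le_const (μ := m) (.of_forall hC)
  have hintegral := congrArg (fun m => ∫ y, g y ∂m) (map_cesaroPushforward_add hT n ν)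
  simp only [integral_add_measure (hint _) ((hint _).smul_measure hinv), integral_smul_measure,
    toReal_inv, toReal_natCast] at hintegral
  rw [sub_eq_sub_iff_add_eq_add.2 (hintegral.trans (add_comm _ _)), ← smul_sub, norm_smul,
    norm_inv, RCLike.norm_natCast, inv_mul_eq_div, two_mul]
  gcongr
  exact (norm_sub_le _ _).trans (add_le_add (hbound _) (hbound _))

theorem tendsto_map_of_tendsto_of_eventuallyEq_cesaroPushforward {ι : Type*} {l : Filter ι}
    [TopologicalSpace Y] [OpensMeasurableSpace Y] (hT : Measurable T) {n : ι → ℕ}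
    (hn : Tendsto n l atTop) {ν : ι → Measure Y} [∀ k, IsProbabilityMeasure (ν k)]
    {μs : ι → ProbabilityMeasure Y} {μ : ProbabilityMeasure Y}
    (hμs : ∀ᶠ k in l, (μs k : Measure Y) = cesaroPushforward T (n k) (ν k))
    (hlim : Tendsto μs l (𝓝 μ)) :
    Tendsto (fun k => (μs k).map hT.aemeasurable) l (𝓝 μ) := by
  rw [ProbabilityMeasure.tendsto_iff_forall_integral_tendsto] at hlim ⊢
  intro g
  have hdecay : Tendsto (fun k => 2 * ‖g‖ / (n k : ℝ)) l (𝓝 0) :=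
    tendsto_const_nhds.div_atTop (tendsto_natCast_atTop_atTop.comp hn)
  have hdiff : Tendsto
      (fun k => ∫ y, g y ∂(μs k : Measure Y).map T - ∫ y, g y ∂(μs k : Measure Y)) l (𝓝 0) := by
    refine squeeze_zero_norm' ?_ hdecay
    filter_upwards [hμs, hn.eventually_ne_atTop 0] with k hk hnk
    rw [hk]
    exact norm_integral_map_sub_integral_cesaroPushforward_le hT hnk
      g.continuous.stronglyMeasurable g.norm_coe_le_norm
  simpa only [sub_add_cancel, zero_add] using! hdiff.add (hlim g)

end CesaroPushforward

open scoped BoundedContinuousFunction in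
theorem weakStar_limit_of_birkhoff_averages_invariant_SPT_general
    {ι Ω Y : Type*} {l : Filter ι} [l.NeBot] [l.IsCountablyGenerated]
    [TopologicalSpace Ω] [HasOuterApproxClosed Ω] [MeasurableSpace Ω] [BorelSpace Ω]
    [TopologicalSpace Y] [HasOuterApproxClosed Y] [MeasurableSpace Y] [BorelSpace Y]
    {π : Y → Ω} (hπ : Continuous π) {φ : Ω → Ω} (hφ : Continuous φ)
    {T : Y → Y} (hT : Measurable T) (hsemi : Function.Semiconj π T φ)
    (hH : ∀ ν : Measure Ω, IsProbabilityMeasure ν → MeasurePreserving φ ν ν →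
      ν (π '' {y | ¬ ContinuousAt T y}) = 0)
    {ν : ι → Measure Y} [∀ k, IsProbabilityMeasure (ν k)]
    {n : ι → ℕ} (hn : Tendsto n l atTop)
    {μ : Measure Y} [IsProbabilityMeasure μ]
    (hconv : ∀ g : Y →ᵇ ℝ,
      Tendsto (fun k => ∫ y, g y ∂cesaroPushforward T (n k) (ν k)) l (𝓝 (∫ y, g y ∂μ))) :
    MeasurePreserving T μ μ := by
  have hprob : ∀ᶠ k in l, ∃ m : ProbabilityMeasure Y,
      (m : Measure Y) = cesaroPushforward T (n k) (ν k) :=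
    (hn.eventually_ne_atTop 0).mono fun k hnk =>
      ⟨⟨_, isProbabilityMeasure_cesaroPushforward hT hnk⟩, rfl⟩
  obtain ⟨μs, hμs⟩ := hprob.choice
  have hlim : Tendsto μs l (𝓝 ⟨μ, inferInstance⟩) :=
    ProbabilityMeasure.tendsto_iff_forall_integral_tendsto.2 fun g =>
      (hconv g).congr' (hμs.mono fun k hk => by simp only [hk])
  exact measurePreserving_of_semiconj_of_tendsto_map hπ hφ hT hsemi hH hlim
    (tendsto_map_of_tendsto_of_eventuallyEq_cesaroPushforward hT hn hμs hlim)

/-- Any weak* limit of Birkhoff averages of Dirac measures along orbits of a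
skew-product transformation satisfying condition (H) is invariant. -/
theorem weakStar_limit_of_birkhoff_averages_invariant_SPT
    {Ω X : Type*}
    [MetricSpace Ω] [CompactSpace Ω] [MeasurableSpace Ω] [BorelSpace Ω]
    [MetricSpace X] [CompactSpace X] [MeasurableSpace X] [BorelSpace X]
    (φ : Ω → Ω) (hφ : Continuous φ)
    (Φ : Ω × X → Ω × X) (hΦmeas : Measurable Φ)
    (hbase : ∀ p : Ω × X, (Φ p).1 = φ p.1)
    (hH : ∀ ν : Measure Ω, IsProbabilityMeasure ν →
      (∀ s : Set Ω, MeasurableSet s → ν (φ ⁻¹' s) = ν s) →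
      ν (Prod.fst '' {p : Ω × X | ¬ ContinuousAt Φ p}) = 0)
    (p : ℕ → Ω × X) (n : ℕ → ℕ) (hn : Tendsto n atTop atTop)
    (μk : ℕ → Measure (Ω × X))
    (hμk : ∀ k, μk k =
      ((n k : ℝ≥0∞))⁻¹ • ∑ i ∈ Finset.range (n k), Measure.map Φ^[i] (Measure.dirac (p k)))
    (μ' : Measure (Ω × X)) (hμ' : IsProbabilityMeasure μ')
    (hconv : ∀ g : Ω × X → ℝ, Continuous g →
      Tendsto (fun k => ∫ q, g q ∂(μk k)) atTop (𝓝 (∫ q, g q ∂μ'))) :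
    ∀ s : Set (Ω × X), MeasurableSet s → μ' (Φ ⁻¹' s) = μ' s := by
  obtain rfl : μk = fun k => cesaroPushforward Φ (n k) (Measure.dirac (p k)) := funext hμk
  have hpres : MeasurePreserving Φ μ' μ' :=
    weakStar_limit_of_birkhoff_averages_invariant_SPT_general continuous_fst hφ hΦmeas hbase
      (fun ν hν hφν => hH ν hν fun s hs => hφν.measure_preimage hs.nullMeasurableSet) hn
      fun g => hconv g g.continuous
  exact fun s hs => hpres.measure_preimage hs.nullMeasurableSet
end
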